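/- Let a budget profile be given (integer m ≥ 1, strictly increasing positive real privacy budgets ε_1 < ε_2 < ⋯ < ε_m, positive integer counts n_1, …, n_m, n = n_1 + ⋯ + n_m, Z = (n − n_m)(n − n_m + 1/4)), let d ≥ 1 be an integer, and take sensitivity I = 1/d. Then the OBS error of the (1/2)-scaled profile satisfies errO_{1/d}(1/2) ≤ min( 8/(d² ε_1²) , Z + 8/(d² ε_m²) ). (This is the bound on the average dissimilarity-calculation error ērr_DC per time slot in the proofs of Theorems 2 and 3: the dissimilarity query has sensitivity 1/d and each user contributes budget ε_i/(2w_i), i.e., the per-window average budgets halved.) -/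

import Mathlib

open Finset

/-- Sampling probability p_k(θ) = (e^{ε_k} − 1)/(e^{θ} − 1). -/
noncomputable def samplingP {m : ℕ} (ε : Fin m → ℝ) (k : Fin m) (θ : ℝ) : ℝ :=
  (Real.exp (ε k) - 1) / (Real.exp θ - 1)

/-- Sampling error err_s(θ). -/
noncomputable def errS {m : ℕ} (ε : Fin m → ℝ) (nn : Fin m → ℕ) (θ : ℝ) : ℝ :=
  (∑ k, if ε k < θ then (nn k : ℝ) * samplingP ε k θ * (1 - samplingP ε k θ) else 0)
    + (∑ k, if ε k < θ then (nn k : ℝ) * (1 - samplingP ε k θ) else 0) ^ 2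

/-- Noise error err_dp(θ) = 2I²/θ². -/
noncomputable def errDP (I θ : ℝ) : ℝ := 2 * I ^ 2 / θ ^ 2

/-- Total error err(θ) = err_s(θ) + err_dp(θ). -/
noncomputable def errTot {m : ℕ} (ε : Fin m → ℝ) (nn : Fin m → ℕ) (I θ : ℝ) : ℝ :=
  errS ε nn θ + errDP I θ

/-- OBS error: errO_I = min_{1 ≤ j ≤ m} err(ε_j). -/
noncomputable def errO {m : ℕ} (hm : 0 < m) (ε : Fin m → ℝ) (nn : Fin m → ℕ) (I : ℝ) : ℝ :=
  Finset.univ.inf' (Finset.univ_nonempty_iff.mpr (Fin.pos_iff_nonempty.mp hm))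
    (fun j => errTot ε nn I (ε j))

/-- Index of the smallest budget ε_1. -/
def firstIdx {m : ℕ} (hm : 0 < m) : Fin m := ⟨0, hm⟩

/-- Index of the largest budget ε_m. -/
def lastIdx {m : ℕ} (hm : 0 < m) : Fin m := ⟨m - 1, Nat.sub_lt hm Nat.one_pos⟩

/-- Z = (n − n_m)(n − n_m + 1/4). -/
noncomputable def Zval {m : ℕ} (hm : 0 < m) (nn : Fin m → ℕ) : ℝ :=
  ((∑ j, (nn j : ℝ)) - nn (lastIdx hm)) * ((∑ j, (nn j : ℝ)) - nn (lastIdx hm) + 1 / 4)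

/-- N-th square harmonic number H²_N = Σ_{k=1}^N 1/k². -/
noncomputable def sqHarmonic (N : ℕ) : ℝ := ∑ k ∈ Finset.Icc 1 N, 1 / (k : ℝ) ^ 2

/-- At the smallest budget nobody is sampled out, so the sampling error vanishes. -/
lemma errS_eq_zero_of_forall_le {m : ℕ} (ε : Fin m → ℝ) (nn : Fin m → ℕ) (θ : ℝ)
    (h : ∀ k, θ ≤ ε k) : errS ε nn θ = 0 := by
  simp [errS, fun k => not_lt.mpr (h k)]

lemma samplingP_nonneg {m : ℕ} (ε : Fin m → ℝ) (k : Fin m) {θ : ℝ}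
    (hε : 0 ≤ ε k) (hθ : 0 ≤ θ) : 0 ≤ samplingP ε k θ :=
  div_nonneg (sub_nonneg.mpr (Real.one_le_exp hε)) (sub_nonneg.mpr (Real.one_le_exp hθ))

lemma samplingP_le_one {m : ℕ} (ε : Fin m → ℝ) (k : Fin m) {θ : ℝ}
    (hθ : 0 ≤ θ) (h : ε k ≤ θ) : samplingP ε k θ ≤ 1 :=
  div_le_one_of_le₀ (sub_le_sub_right (Real.exp_le_exp.mpr h) 1)
    (sub_nonneg.mpr (Real.one_le_exp hθ))

/-- The sampling error is at most `N (N + 1 / 4)`, where `N` counts the users whose budget lies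
below the threshold. -/
lemma errS_le {m : ℕ} (ε : Fin m → ℝ) (nn : Fin m → ℕ) {θ : ℝ}
    (hε : ∀ k, 0 ≤ ε k) (hθ : 0 ≤ θ) :
    errS ε nn θ ≤ (∑ k, if ε k < θ then (nn k : ℝ) else 0) *
      ((∑ k, if ε k < θ then (nn k : ℝ) else 0) + 1 / 4) := by
  have hvar : (∑ k, if ε k < θ then
      (nn k : ℝ) * samplingP ε k θ * (1 - samplingP ε k θ) else 0) ≤
      (∑ k, if ε k < θ then (nn k : ℝ) else 0) * (1 / 4) := by
    rw [Finset.sum_mul]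
    refine Finset.sum_le_sum fun k _ => ?_
    split_ifs
    · rw [mul_assoc]
      refine mul_le_mul_of_nonneg_left ?_ (Nat.cast_nonneg _)
      nlinarith [sq_nonneg (samplingP ε k θ - 1 / 2)]
    · simp
  have hbias_nonneg : 0 ≤ ∑ k, if ε k < θ then (nn k : ℝ) * (1 - samplingP ε k θ) else 0 := by
    refine Finset.sum_nonneg fun k _ => ?_
    split_ifs with h
    · exact mul_nonneg (Nat.cast_nonneg _) (sub_nonneg.mpr (samplingP_le_one ε k hθ h.le))
    · exact le_rfl
  have hbias : (∑ k, if ε k < θ then (nn k : ℝ) * (1 - samplingP ε k θ) else 0) ≤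
      ∑ k, if ε k < θ then (nn k : ℝ) else 0 := by
    refine Finset.sum_le_sum fun k _ => ?_
    split_ifs
    · exact mul_le_of_le_one_right (Nat.cast_nonneg _)
        (sub_le_self 1 (samplingP_nonneg ε k (hε k) hθ))
    · exact le_rfl
  have hsq := pow_le_pow_left₀ hbias_nonneg hbias 2
  unfold errS
  linarith

/-- All users except those holding the largest budget lie below it. -/
lemma sum_count_lt_lastIdx {m : ℕ} (hm : 0 < m) {ε : Fin m → ℝ} (hε : StrictMono ε)
    (nn : Fin m → ℕ) :
    (∑ k, if ε k < ε (lastIdx hm) then (nn k : ℝ) else 0) =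
      (∑ k, (nn k : ℝ)) - nn (lastIdx hm) := by
  have hlt : ∀ k, ε k < ε (lastIdx hm) ↔ k ≠ lastIdx hm := fun k => by
    rw [hε.lt_iff_lt, Fin.lt_def, Ne, Fin.ext_iff]
    simp only [lastIdx]
    omega
  simp only [hlt]
  rw [← Finset.sum_filter, Finset.filter_ne', ← Finset.sum_erase_add _ _ (Finset.mem_univ _),
    add_sub_cancel_right]

lemma errDP_half (d x : ℝ) : errDP (1 / d) (1 / 2 * x) = 8 / (d ^ 2 * x ^ 2) := by
  rw [errDP, mul_pow, div_pow, mul_div_assoc, div_div, mul_left_comm, ← div_div]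
  ring

/-- Bound on the average dissimilarity-calculation error per time slot in the proofs
of Theorems 2 and 3: sensitivity 1/d, budgets halved. -/
theorem dc_error_bound (m : ℕ) (hm : 0 < m) (ε : Fin m → ℝ) (nn : Fin m → ℕ)
    (hpos : ∀ j, 0 < ε j) (hmono : StrictMono ε) (hcount : ∀ j, 0 < nn j)
    (d : ℕ) (hd : 1 ≤ d) :
    errO hm (fun j => (1 / 2 : ℝ) * ε j) nn (1 / (d : ℝ)) ≤
      min (8 / ((d : ℝ) ^ 2 * (ε (firstIdx hm)) ^ 2))
        (Zval hm nn + 8 / ((d : ℝ) ^ 2 * (ε (lastIdx hm)) ^ 2)) := by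
  have hscaled : StrictMono fun j => (1 / 2 : ℝ) * ε j := hmono.const_mul (by norm_num)
  have hnonneg : ∀ j, 0 ≤ (1 / 2 : ℝ) * ε j := fun j => by linarith [hpos j]
  refine le_min ?_ ?_
  · refine (Finset.inf'_le _ (Finset.mem_univ (firstIdx hm))).trans_eq ?_
    rw [errTot, errDP_half, errS_eq_zero_of_forall_le, zero_add]
    exact fun k => hscaled.monotone (Fin.le_def.mpr (Nat.zero_le _))
  · refine (Finset.inf'_le _ (Finset.mem_univ (lastIdx hm))).trans ?_
    rw [errTot, errDP_half, Zval, ← sum_count_lt_lastIdx hm hscaled nn]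
    gcongr
    exact errS_le _ nn hnonneg (hnonneg _)
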